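/- Let N ≥ 1, let X be a random variable with values in {0,1,...,N}, let C be a finite set, and let ρ be a probability measure on {0,...,N}^C such that for every c ∈ C the distribution of X is stochastically dominated by the c-marginal of ρ. Let H be any C-valued random variable on the same probability space as X, and define Y : C → {0,...,N} by Y(c) = X · 1[H = c]. Then the distribution of Y is stochastically dominated by ρ. -/

import Mathlib

open MeasureTheory ProbabilityTheory

/-- `μ` is stochastically dominated by `ν`. -/
def StochDom {E : Type*} [MeasurableSpace E] [Preorder E] (μ ν : Measure E) : Prop :=
  ∃ κ : Measure (E × E), IsProbabilityMeasure κ ∧ κ.map Prod.fst = μ ∧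
    κ.map Prod.snd = ν ∧ κ {q | q.1 ≤ q.2} = 1

/-- A measure charging `A` with at least mass `m` has a part of mass exactly `m` living on `A`. -/
theorem exists_add_eq_of_le_measure {E : Type*} [MeasurableSpace E] (ν : Measure E)
    [IsFiniteMeasure ν] {A : Set E} (hA : MeasurableSet A) {m : ENNReal} (hm : m ≤ ν A) :
    ∃ w ν' : Measure E, w + ν' = ν ∧ w Set.univ = m ∧ w Aᶜ = 0 := by
  refine ⟨(m / ν A) • ν.restrict A, (1 - m / ν A) • ν.restrict A + ν.restrict Aᶜ, ?_, ?_, ?_⟩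
  · rw [← add_assoc, ← add_smul, add_tsub_cancel_of_le (ENNReal.div_le_of_le_mul (by simpa)),
      one_smul, Measure.restrict_add_restrict_compl hA]
  · rw [Measure.smul_apply, Measure.restrict_apply_univ, smul_eq_mul]
    exact ENNReal.div_mul_cancel' (fun h => by simpa [h] using hm)
      (fun h => absurd h (measure_ne_top ν A))
  · simp [Measure.restrict_apply hA.compl]

/-- Greedy transport: if every atom `y` of `μ` satisfies `μ {x | f y ≤ f x} ≤ ρ (Set.Ici y)` for
some ranking function `f`, then serving the atoms of `μ` in order of decreasing rank yields a
monotone coupling. -/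
theorem stochDom_of_rank {E α : Type*} [Fintype E] [MeasurableSpace E]
    [MeasurableSingletonClass E] [Preorder E] [LinearOrder α] (f : E → α) (μ ρ : Measure E)
    [IsProbabilityMeasure μ] [IsProbabilityMeasure ρ]
    (h : ∀ y, μ {y} ≠ 0 → μ {x | f y ≤ f x} ≤ ρ (Set.Ici y)) : StochDom μ ρ := by
  classical
  have greedy : ∀ S : Finset E, ∃ (κ : Measure (E × E)) (ν : Measure E),
      κ.map Prod.fst = μ.restrict S ∧ κ.map Prod.snd + ν = ρ ∧ κ {q | q.1 ≤ q.2}ᶜ = 0 := by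
    intro S
    induction S using Finset.induction_on_min_value f with
    | empty => exact ⟨0, ρ, by simp, by simp, by simp⟩
    | insert a S ha hmin ih =>
      obtain ⟨κ, ν, hfst, hsnd, hle⟩ := ih
      have : IsFiniteMeasure ν := isFiniteMeasure_of_le ρ (hsnd ▸ Measure.le_add_left le_rfl)
      have hroom : μ {a} ≤ ν (Set.Ici a) := by
        by_cases h0 : μ {a} = 0
        · simp [h0]
        have hκ : κ.map Prod.snd (Set.Ici a) ≤ μ S := by
          calc κ.map Prod.snd (Set.Ici a) ≤ κ Set.univ := by
                rw [Measure.map_apply measurable_snd (Set.toFinite _).measurableSet]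
                exact measure_mono (Set.subset_univ _)
            _ = κ.map Prod.fst Set.univ := by
                rw [Measure.map_apply measurable_fst .univ, Set.preimage_univ]
            _ = μ S := by rw [hfst, Measure.restrict_apply_univ]
        refine (ENNReal.add_le_add_iff_left (measure_ne_top μ S)).1 ?_
        calc μ S + μ {a} = μ (S ∪ {a}) :=
              (measure_union (by simpa using ha) (measurableSet_singleton a)).symm
          _ ≤ μ {x | f a ≤ f x} := by
              refine measure_mono ?_
              rintro x (hx | rfl)
              · exact hmin x hx
              · exact le_rfl
          _ ≤ ρ (Set.Ici a) := h a h0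
          _ = κ.map Prod.snd (Set.Ici a) + ν (Set.Ici a) := by rw [← hsnd, Measure.add_apply]
          _ ≤ μ S + ν (Set.Ici a) := by gcongr
      obtain ⟨w, ν', hw, hmass, hsupp⟩ :=
        exists_add_eq_of_le_measure ν (Set.toFinite (Set.Ici a)).measurableSet hroom
      have hpair : Measurable (Prod.mk a : E → E × E) := measurable_prodMk_left
      refine ⟨κ + w.map (Prod.mk a), ν', ?_, ?_, ?_⟩
      · rw [Measure.map_add _ _ measurable_fst, hfst, Measure.map_map measurable_fst hpair,
          Finset.coe_insert, Set.insert_eq, Set.union_comm,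
          Measure.restrict_union (by simpa using ha) (measurableSet_singleton a),
          Measure.restrict_singleton, ← hmass]
        congr 1
        exact Measure.map_const w a
      · rw [Measure.map_add _ _ measurable_snd, Measure.map_map measurable_snd hpair, add_assoc]
        change _ + (w.map id + ν') = ρ
        rw [Measure.map_id, hw, hsnd]
      · rw [Measure.add_apply, hle, Measure.map_apply hpair (Set.toFinite _).measurableSet, zero_add]
        exact hsupp
  obtain ⟨κ, ν, hfst, hsnd, hle⟩ := greedy Finset.univ
  rw [Finset.coe_univ, Measure.restrict_univ] at hfst
  have hκ : IsProbabilityMeasure κ := by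
    have : IsProbabilityMeasure (κ.map Prod.fst) := hfst ▸ inferInstance
    exact Measure.isProbabilityMeasure_of_map Prod.fst
  have hν : ν = 0 := by
    have huniv : κ.map Prod.snd Set.univ + ν Set.univ = 1 := by
      rw [← Measure.add_apply, hsnd, measure_univ]
    rw [Measure.map_apply measurable_snd .univ, Set.preimage_univ, measure_univ] at huniv
    exact Measure.measure_univ_eq_zero.1
      ((ENNReal.add_right_inj ENNReal.one_ne_top).1 (huniv.trans (add_zero 1).symm))
  refine ⟨κ, hκ, hfst, by simpa [hν] using hsnd, ?_⟩
  exact (prob_compl_eq_zero_iff (Set.toFinite _).measurableSet).1 hle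

/-- Stochastic domination bounds the upper tails. -/
theorem StochDom.measure_Ici_le {E : Type*} [MeasurableSpace E] [Preorder E] {μ ν : Measure E}
    (h : StochDom μ ν) {a : E} (ha : MeasurableSet (Set.Ici a))
    (hle : MeasurableSet {q : E × E | q.1 ≤ q.2}) : μ (Set.Ici a) ≤ ν (Set.Ici a) := by
  obtain ⟨κ, _, rfl, rfl, hκ⟩ := h
  rw [Measure.map_apply measurable_fst ha, Measure.map_apply measurable_snd ha]
  refine measure_mono_ae ?_
  filter_upwards [(prob_compl_eq_zero_iff hle).2 hκ] with q hq hqa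
  exact le_trans hqa hq

/-- **The one-column lemma.** If the law of `X` is dominated by every marginal of `ρ`,
and `Y c = X · 1[H = c]`, then the law of `Y` is dominated by `ρ`. -/
theorem stmt1 (N : ℕ) (hN : 1 ≤ N)
    {C : Type*} [Fintype C] [DecidableEq C]
    [MeasurableSpace C] [DiscreteMeasurableSpace C]
    {Ω : Type*} [MeasurableSpace Ω] (P : Measure Ω) [IsProbabilityMeasure P]
    (X : Ω → Fin (N + 1)) (H : Ω → C)
    (hX : Measurable X) (hH : Measurable H)
    (ρ : Measure (C → Fin (N + 1))) [IsProbabilityMeasure ρ]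
    (hdom : ∀ c : C, StochDom (P.map X) (ρ.map (fun x => x c))) :
    StochDom (P.map (fun ω c => if H ω = c then X ω else 0)) ρ := by
  have hY : Measurable (fun ω c => if H ω = c then X ω else 0) :=
    measurable_pi_lambda _ fun c =>
      Measurable.ite (hH (measurableSet_singleton c)) hX measurable_const
  have hprob := Measure.isProbabilityMeasure_map (μ := P) hY.aemeasurable
  have hsup : ∀ ω, (Finset.univ.sup fun c => if H ω = c then X ω else 0) = X ω := by
    refine fun ω => le_antisymm (Finset.sup_le fun c _ => ?_) ?_
    · split_ifs
      exacts [le_rfl, Fin.zero_le _]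
    · simpa using Finset.le_sup (f := fun c => if H ω = c then X ω else 0)
        (Finset.mem_univ (H ω))
  refine stochDom_of_rank (fun y : C → Fin (N + 1) => Finset.univ.sup y) _ ρ fun y hy => ?_
  rw [Measure.map_apply hY (measurableSet_singleton y)] at hy
  obtain ⟨ω, rfl⟩ := nonempty_of_measure_ne_zero hy
  have htail := (hdom (H ω)).measure_Ici_le (a := X ω) (Set.toFinite _).measurableSet
    (Set.toFinite _).measurableSet
  rw [Measure.map_apply hX (Set.toFinite _).measurableSet,
    Measure.map_apply (measurable_pi_apply _) (Set.toFinite _).measurableSet] at htail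
  rw [Measure.map_apply hY (Set.toFinite _).measurableSet]
  have hset : (fun ω c => if H ω = c then X ω else 0) ⁻¹'
      {x : C → Fin (N + 1) | (Finset.univ.sup fun c => if H ω = c then X ω else 0) ≤
        Finset.univ.sup x} = X ⁻¹' Set.Ici (X ω) := by
    ext ω'
    change _ ≤ (Finset.univ.sup fun c => if H ω' = c then X ω' else 0) ↔ X ω ≤ X ω'
    rw [hsup, hsup]
  rw [hset]
  refine htail.trans (measure_mono fun z hz c => ?_)
  dsimp only
  split_ifs with hc
  · exact hc ▸ hz
  · exact Fin.zero_le _
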